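/- arXiv:1801.10298 — 2 statements merged into one kernel-verified Lean document; each statement's English description precedes it below -/
import Mathlib

section
/- In the endomorphism ring of R, the Casimir operator of the 𝔰𝔩₂-triple (H, X⁺, X⁻) satisfies: H² + 2(X⁺X⁻ + X⁻X⁺) = H² − 2H + 4X⁺X⁻ = H² + 2H + 4X⁻X⁺, and this operator equals (E_x − E_y)² + (p−q)(E_x − E_y) − 2(E_x + E_y) − ( r_x²·r_y² + r_x²·Δ_x + r_y²·Δ_y + Δ_x·Δ_y ) + ( (p−q)²/4 − (p+q) )·id. -/
noncomputable section

/-- The polynomial ring `ℂ[x₁,…,x_p, y₁,…,y_q]`. -/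
abbrev Rpq (p q : ℕ) := MvPolynomial (Fin p ⊕ Fin q) ℂ

/-- Multiplication by `x_i`. -/
def xop (p q : ℕ) (i : Fin p) : Module.End ℂ (Rpq p q) :=
  LinearMap.mulLeft ℂ (MvPolynomial.X (Sum.inl i))

/-- Multiplication by `y_j`. -/
def yop (p q : ℕ) (j : Fin q) : Module.End ℂ (Rpq p q) :=
  LinearMap.mulLeft ℂ (MvPolynomial.X (Sum.inr j))

/-- The partial derivative `∂_{x_i}`. -/
def dx (p q : ℕ) (i : Fin p) : Module.End ℂ (Rpq p q) :=
  (MvPolynomial.pderiv (Sum.inl i)).toLinearMap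

/-- The partial derivative `∂_{y_j}`. -/
def dy (p q : ℕ) (j : Fin q) : Module.End ℂ (Rpq p q) :=
  (MvPolynomial.pderiv (Sum.inr j)).toLinearMap

/-- The Euler operator `E_x = Σ_i x_i ∂_{x_i}`. -/
def Eop_x (p q : ℕ) : Module.End ℂ (Rpq p q) := ∑ i : Fin p, xop p q i * dx p q i

/-- The Euler operator `E_y = Σ_j y_j ∂_{y_j}`. -/
def Eop_y (p q : ℕ) : Module.End ℂ (Rpq p q) := ∑ j : Fin q, yop p q j * dy p q j

/-- Multiplication by `r_x² = Σ_i x_i²`. -/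
def rx2 (p q : ℕ) : Module.End ℂ (Rpq p q) :=
  LinearMap.mulLeft ℂ (∑ i : Fin p, MvPolynomial.X (Sum.inl i) ^ 2)

/-- Multiplication by `r_y² = Σ_j y_j²`. -/
def ry2 (p q : ℕ) : Module.End ℂ (Rpq p q) :=
  LinearMap.mulLeft ℂ (∑ j : Fin q, MvPolynomial.X (Sum.inr j) ^ 2)

/-- The Laplacian `Δ_x = Σ_i ∂_{x_i}²`. -/
def Δx (p q : ℕ) : Module.End ℂ (Rpq p q) := ∑ i : Fin p, dx p q i * dx p q i

/-- The Laplacian `Δ_y = Σ_j ∂_{y_j}²`. -/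
def Δy (p q : ℕ) : Module.End ℂ (Rpq p q) := ∑ j : Fin q, dy p q j * dy p q j

/-- `H = −E_x − (p/2)·id + E_y + (q/2)·id`. -/
def Hop (p q : ℕ) : Module.End ℂ (Rpq p q) :=
  -Eop_x p q - ((p : ℂ) / 2) • 1 + Eop_y p q + ((q : ℂ) / 2) • 1

/-- `X⁺ = −(1/2)(Δ_x + r_y²)`. -/
def Xplus (p q : ℕ) : Module.End ℂ (Rpq p q) :=
  -((1 : ℂ) / 2) • (Δx p q + ry2 p q)

/-- `X⁻ = (1/2)(r_x² + Δ_y)`. -/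
def Xminus (p q : ℕ) : Module.End ℂ (Rpq p q) :=
  ((1 : ℂ) / 2) • (rx2 p q + Δy p q)

/-- The matrix `I_{p,q} = diag(1_p, −1_q)` over `ℂ`. -/
def IpqC (p q : ℕ) : Matrix (Fin (p + q)) (Fin (p + q)) ℂ :=
  Matrix.diagonal (fun i => if (i : ℕ) < p then 1 else -1)

end

/-!
For each of the two sets of variables, the canonical commutation relations give
`[Δ, r²] = 4E + 2n`, where `n` is the number of variables. As moreover `Δ_x` commutes with `Δ_y`
and `r_x²` with `r_y²`, it follows that `[X⁺, X⁻] = H`, which converts between the three forms of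
the Casimir operator. In the expansion of `H² + 2H + 4X⁻X⁺`, the only product whose reordering
matters is `Δ_y r_y²`; its commutator completes the Euler and constant terms.
-/

theorem commute_mul_self_mul_self {S : Type*} [Semigroup S] {a b : S} (h : Commute a b) :
    Commute (a * a) (b * b) :=
  (h.mul_left h).mul_right (h.mul_left h)

theorem commute_sum_mul_self {S ι κ : Type*} [NonUnitalSemiring S] [Fintype ι] [Fintype κ]
    {a : ι → S} {b : κ → S} (h : ∀ i j, Commute (a i) (b j)) :
    Commute (∑ i, a i * a i) (∑ j, b j * b j) :=
  Commute.sum_left _ _ _ fun i _ => Commute.sum_right _ _ _ fun j _ =>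
    commute_mul_self_mul_self (h i j)

section Ring

variable {A : Type*} [Ring A]

theorem lie_mul_self_mul_self_of_lie_eq_one {a d : A} (h : ⁅d, a⁆ = 1) :
    ⁅d * d, a * a⁆ = 4 • (a * d) + 2 • (1 : A) := by
  have hda : d * a = a * d + 1 := eq_add_of_sub_eq' h
  have hdaa : d * (a * a) = a * a * d + 2 • a := by
    rw [← mul_assoc, hda, add_mul, mul_assoc, hda]
    noncomm_ring
  calc d * d * (a * a) - a * a * (d * d)
      = d * (d * (a * a)) - a * a * (d * d) := by rw [mul_assoc]
    _ = d * (a * a) * d + 2 • (d * a) - a * a * (d * d) := by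
        rw [hdaa, mul_add, ← mul_assoc d (a * a), hdaa, mul_smul_comm]
    _ = 4 • (a * d) + 2 • (1 : A) := by
        rw [hdaa, hda]
        noncomm_ring

theorem lie_sum_mul_self_of_canonical_commutation {ι : Type*} [Fintype ι] [DecidableEq ι]
    {a d : ι → A} (h : ∀ i j, ⁅d i, a j⁆ = if i = j then 1 else 0) :
    ⁅∑ i, d i * d i, ∑ j, a j * a j⁆ =
      4 • ∑ i, a i * d i + (2 * Fintype.card ι) • (1 : A) := by
  have lie_sq (i j : ι) : ⁅d i * d i, a j * a j⁆ =
      if i = j then 4 • (a i * d i) + 2 • (1 : A) else 0 := by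
    split_ifs with hij
    · subst hij
      exact lie_mul_self_mul_self_of_lie_eq_one (by simp [h])
    · have hcomm : Commute (d i) (a j) := by simp [commute_iff_lie_eq, h, hij]
      exact (commute_mul_self_mul_self hcomm).lie_eq
  let _ : LieRing A := .ofAssociativeRing
  calc ⁅∑ i, d i * d i, ∑ j, a j * a j⁆
      = ∑ i, ∑ j, ⁅d i * d i, a j * a j⁆ := sum_lie_sum ..
    _ = ∑ i, (4 • (a i * d i) + 2 • (1 : A)) := by simp [lie_sq]
    _ = 4 • ∑ i, a i * d i + (2 * Fintype.card ι) • (1 : A) := by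
        simp [Finset.sum_add_distrib, Finset.smul_sum, mul_comm]

end Ring

section Casimir

variable {A : Type*} [Ring A] (K : Type*) [CommRing K] [Algebra K A] {h e f : A}

theorem casimir_eq_sq_sub_add_of_lie_eq (hef : ⁅e, f⁆ = h) :
    h ^ 2 + (2 : K) • (e * f + f * e) = h ^ 2 - (2 : K) • h + (4 : K) • (e * f) := by
  rw [← hef, Ring.lie_def]
  module

theorem casimir_eq_sq_add_add_of_lie_eq (hef : ⁅e, f⁆ = h) :
    h ^ 2 + (2 : K) • (e * f + f * e) = h ^ 2 + (2 : K) • h + (4 : K) • (f * e) := by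
  rw [← hef, Ring.lie_def]
  module

end Casimir

theorem neg_sub_smul_one_sq {K A : Type*} [CommRing K] [Ring A] [Algebra K A] (a : A) (c : K) :
    (-a - c • 1) ^ 2 = a ^ 2 + (2 * c) • a + c ^ 2 • (1 : A) := by
  simp only [sq, sub_mul, mul_sub, neg_mul, mul_neg, smul_mul_assoc, mul_smul_comm, one_mul,
    mul_one]
  module

section MulLeft

variable {R S : Type*} [CommSemiring R] [CommSemiring S] [Algebra R S]

theorem commute_mulLeft (f g : S) :
    Commute (LinearMap.mulLeft R f) (LinearMap.mulLeft R g) :=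
  (Commute.all f g).map (Algebra.lmul R S)

theorem mulLeft_sum_sq {ι : Type*} [Fintype ι] (f : ι → S) :
    LinearMap.mulLeft R (∑ i, f i ^ 2) =
      ∑ i, LinearMap.mulLeft R (f i) * LinearMap.mulLeft R (f i) := by
  change Algebra.lmul R S (∑ i, f i ^ 2) = ∑ i, Algebra.lmul R S (f i) * Algebra.lmul R S (f i)
  simp only [map_sum, sq, map_mul]

end MulLeft

section MvPolynomial

open MvPolynomial

variable {R σ ι : Type*} [CommRing R]

theorem lie_pderiv_mulLeft_X [DecidableEq σ] (i j : σ) :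
    ⁅((pderiv i).toLinearMap : Module.End R (MvPolynomial σ R)),
        LinearMap.mulLeft R (X j : MvPolynomial σ R)⁆ =
      if i = j then 1 else 0 := by
  refine LinearMap.ext fun f => ?_
  obtain rfl | hij := eq_or_ne i j
  · simp [Ring.lie_def]
  · simp [Ring.lie_def, hij, pderiv_X_of_ne hij.symm]

theorem commute_pderiv (i j : σ) :
    Commute ((pderiv i).toLinearMap : Module.End R (MvPolynomial σ R))
      (pderiv j).toLinearMap := by
  classical
  have hD : ⁅pderiv (R := R) i, pderiv (R := R) j⁆ = 0 :=
    derivation_ext fun k => by simp [Derivation.commutator_apply, Pi.single_apply, apply_ite]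
  rw [commute_iff_lie_eq, ← Derivation.commutator_coe_linear_map, hD, Derivation.coe_zero_linearMap]

theorem lie_laplacian_mulLeft_sum_X_sq [Fintype ι] {v : ι → σ} (hv : v.Injective) :
    ⁅∑ i, ((pderiv (v i)).toLinearMap : Module.End R (MvPolynomial σ R)) *
        (pderiv (v i)).toLinearMap, LinearMap.mulLeft R (∑ i, X (v i) ^ 2)⁆ =
      4 • ∑ i, LinearMap.mulLeft R (X (v i)) * (pderiv (v i)).toLinearMap +
        (2 * Fintype.card ι) • (1 : Module.End R (MvPolynomial σ R)) := by
  classical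
  rw [mulLeft_sum_sq]
  refine lie_sum_mul_self_of_canonical_commutation fun i j => ?_
  simp only [lie_pderiv_mulLeft_X, hv.eq_iff]

end MvPolynomial

section Rpq

variable (p q : ℕ)

theorem Δx_mul_rx2 : Δx p q * rx2 p q =
    rx2 p q * Δx p q + ((4 : ℂ) • Eop_x p q + (2 * p : ℂ) • 1) := by
  have hlie := lie_laplacian_mulLeft_sum_X_sq (R := ℂ) (Sum.inl_injective (α := Fin p) (β := Fin q))
  rw [Fintype.card_fin] at hlie
  refine (eq_add_of_sub_eq' hlie).trans ?_
  simp only [Δx, rx2, Eop_x, xop, dx]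
  module

theorem Δy_mul_ry2 : Δy p q * ry2 p q =
    ry2 p q * Δy p q + ((4 : ℂ) • Eop_y p q + (2 * q : ℂ) • 1) := by
  have hlie := lie_laplacian_mulLeft_sum_X_sq (R := ℂ) (Sum.inr_injective (α := Fin p) (β := Fin q))
  rw [Fintype.card_fin] at hlie
  refine (eq_add_of_sub_eq' hlie).trans ?_
  simp only [Δy, ry2, Eop_y, yop, dy]
  module

theorem commute_Δx_Δy : Commute (Δx p q) (Δy p q) :=
  commute_sum_mul_self fun i j => commute_pderiv (Sum.inl i) (Sum.inr j)

theorem commute_rx2_ry2 : Commute (rx2 p q) (ry2 p q) :=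
  commute_mulLeft _ _

theorem lie_Xplus_Xminus : ⁅Xplus p q, Xminus p q⁆ = Hop p q := by
  simp only [Ring.lie_def, Xplus, Xminus, Hop, smul_mul_assoc, mul_smul_comm, mul_add, add_mul,
    Δx_mul_rx2, Δy_mul_ry2, (commute_Δx_Δy p q).eq, (commute_rx2_ry2 p q).eq]
  module

theorem Hop_sq : Hop p q ^ 2 = (Eop_x p q - Eop_y p q) ^ 2 +
    ((p : ℂ) - q) • (Eop_x p q - Eop_y p q) + (((p : ℂ) - q) ^ 2 / 4) • 1 := by
  have hH : Hop p q = -(Eop_x p q - Eop_y p q) - (((p : ℂ) - q) / 2) • 1 := by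
    rw [Hop]
    module
  rw [hH, neg_sub_smul_one_sq]
  module

theorem four_smul_Xminus_mul_Xplus : (4 : ℂ) • (Xminus p q * Xplus p q) =
    -(rx2 p q * ry2 p q + rx2 p q * Δx p q + ry2 p q * Δy p q + Δx p q * Δy p q)
      - (4 : ℂ) • Eop_y p q - (2 * q : ℂ) • 1 := by
  simp only [Xminus, Xplus, smul_mul_assoc, mul_smul_comm, mul_add, add_mul, Δy_mul_ry2,
    (commute_Δx_Δy p q).eq]
  module

end Rpq

theorem stmt_6 (p q : ℕ) (hp : 1 ≤ p) (hq : 1 ≤ q) :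
    Hop p q ^ 2 + (2 : ℂ) • (Xplus p q * Xminus p q + Xminus p q * Xplus p q) =
      Hop p q ^ 2 - (2 : ℂ) • Hop p q + (4 : ℂ) • (Xplus p q * Xminus p q) ∧
    Hop p q ^ 2 + (2 : ℂ) • (Xplus p q * Xminus p q + Xminus p q * Xplus p q) =
      Hop p q ^ 2 + (2 : ℂ) • Hop p q + (4 : ℂ) • (Xminus p q * Xplus p q) ∧
    Hop p q ^ 2 + (2 : ℂ) • (Xplus p q * Xminus p q + Xminus p q * Xplus p q) =
      (Eop_x p q - Eop_y p q) ^ 2 + ((p : ℂ) - (q : ℂ)) • (Eop_x p q - Eop_y p q)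
        - (2 : ℂ) • (Eop_x p q + Eop_y p q)
        - (rx2 p q * ry2 p q + rx2 p q * Δx p q + ry2 p q * Δy p q + Δx p q * Δy p q)
        + (((p : ℂ) - (q : ℂ)) ^ 2 / 4 - ((p : ℂ) + (q : ℂ))) • 1 := by
  have hlie := lie_Xplus_Xminus p q
  have hcas := casimir_eq_sq_add_add_of_lie_eq ℂ hlie
  refine ⟨casimir_eq_sq_sub_add_of_lie_eq ℂ hlie, hcas, ?_⟩
  rw [hcas, Hop_sq, four_smul_Xminus_mul_Xplus, Hop]
  module
end

section
/- Let h₁ be a harmonic polynomial on ℝ^p homogeneous of degree k, let h₂ be a harmonic polynomial on ℝ^q homogeneous of degree l, set κ₊ = k + p/2 and κ₋ = l + q/2, and let μ ∈ ℕ. Then the smooth function f(x,y) = h₁(x)·h₂(y)·ρ_x^μ·Ψ_{κ₋}(ρ_x ρ_y) on ℝ^p × ℝ^q satisfies H f = (−κ₊ + κ₋ − 2μ)·f and X⁻ f = 0 everywhere; i.e. f is a lowest weight vector of weight λ = −κ₊ + κ₋ − 2μ for the 𝔰𝔩₂-action. -/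
noncomputable section

/-- Points `(x, y) ∈ ℝ^p × ℝ^q`. -/
abbrev Pt (p q : ℕ) := (Fin p → ℝ) × (Fin q → ℝ)

/-- The partial derivative `∂_{x_i}` of a function on `ℝ^p × ℝ^q`. -/
def pdx (p q : ℕ) (i : Fin p) (f : Pt p q → ℂ) : Pt p q → ℂ :=
  fun z => fderiv ℝ f z ((Pi.single i 1 : Fin p → ℝ), (0 : Fin q → ℝ))

/-- The partial derivative `∂_{y_j}` of a function on `ℝ^p × ℝ^q`. -/
def pdy (p q : ℕ) (j : Fin q) (f : Pt p q → ℂ) : Pt p q → ℂ :=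
  fun z => fderiv ℝ f z ((0 : Fin p → ℝ), (Pi.single j 1 : Fin q → ℝ))

/-- `ρ_x = r_x²/2 = (Σ_i x_i²)/2`. -/
def rhox (p q : ℕ) (z : Pt p q) : ℝ := (∑ i, z.1 i ^ 2) / 2

/-- `ρ_y = r_y²/2 = (Σ_j y_j²)/2`. -/
def rhoy (p q : ℕ) (z : Pt p q) : ℝ := (∑ j, z.2 j ^ 2) / 2

/-- The operator `H = −E_x − p/2 + E_y + q/2`. -/
def HOp (p q : ℕ) (f : Pt p q → ℂ) : Pt p q → ℂ := fun z =>
  -(∑ i, ((z.1 i : ℝ) : ℂ) * pdx p q i f z) - ((p : ℂ) / 2) * f z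
    + (∑ j, ((z.2 j : ℝ) : ℂ) * pdy p q j f z) + ((q : ℂ) / 2) * f z

/-- The operator `X⁺ = −(1/2)(Δ_x + r_y²)`. -/
def XpOp (p q : ℕ) (f : Pt p q → ℂ) : Pt p q → ℂ := fun z =>
  -(1 / 2 : ℂ) * ((∑ i, pdx p q i (pdx p q i f) z) + (((∑ j, z.2 j ^ 2 : ℝ)) : ℂ) * f z)

/-- The operator `X⁻ = (1/2)(r_x² + Δ_y)`. -/
def XmOp (p q : ℕ) (f : Pt p q → ℂ) : Pt p q → ℂ := fun z =>
  (1 / 2 : ℂ) * ((((∑ i, z.1 i ^ 2 : ℝ)) : ℂ) * f z + ∑ j, pdy p q j (pdy p q j f) z)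

/-- Rising factorial `(α)ₙ = α(α+1)⋯(α+n−1)` for a complex number `α`. -/
def rising (α : ℂ) : ℕ → ℂ
  | 0 => 1
  | n + 1 => rising α n * (α + n)

/-- Falling factorial `⟨β⟩ₙ = β(β−1)⋯(β−n+1)` for a complex number `β`. -/
def falling (β : ℂ) : ℕ → ℂ
  | 0 => 1
  | n + 1 => falling β n * (β - n)

/-- `Ψ_α(u) = Σ_{n=0}^∞ ((−1)ⁿ/(n!·(α)ₙ))·uⁿ`. -/
def Psi (α : ℂ) (u : ℂ) : ℂ :=
  ∑' n : ℕ, ((-1) ^ n / ((n.factorial : ℂ) * rising α n)) * u ^ n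

/-- `ψ_α(x,y) = Ψ_α(ρ_x ρ_y)`. -/
def psiF (p q : ℕ) (α : ℂ) (z : Pt p q) : ℂ :=
  Psi α (((rhox p q z * rhoy p q z : ℝ)) : ℂ)

end

/-!
Absorbing `ρ_x ^ μ` into `h₁`, the function is `φ ψ_α` with `φ(x, y) = P(x) h₂(y)`, where
`P = h₁ ρ_x ^ μ` is homogeneous of degree `d = k + 2 μ` and `α = l + q / 2`.

The operator `E_y - E_x` is a derivation killing `ρ_x ρ_y`, hence `ψ_α`, so `H` acts on `φ ψ_α`
by the scalar `-(d + p / 2) + (l + q / 2)`.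

For `X⁻`, termwise differentiation gives `dΨ_α/du = -Ψ_{α+1} / α` and the contiguity relation
`u Ψ_{α+2} = α (α + 1) (Ψ_{α+1} - Ψ_α)`, whence
`Δ_y ψ_α = ρ_x ((2 - q / α) ψ_{α+1} - 2 ψ_α)`. As `φ` is harmonic in `y`, the Leibniz rule for `Δ_y`
adds only the gradient term `-2 l ρ_x ψ_{α+1} φ / α`, and `2 - (q + 2 l) / α = 0` leaves
`Δ_y (φ ψ_α) = -r_x² φ ψ_α`.
-/

open Filter Topology

section PowerSeries

theorem norm_mul_pow_le_of_mem_ball (c : ℂ) (n : ℕ) {r : ℝ} {w : ℂ}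
    (hw : w ∈ Metric.ball (0 : ℂ) r) : ‖c * w ^ n‖ ≤ ‖c * (r : ℂ) ^ n‖ := by
  have hwr : ‖w‖ ≤ ‖(r : ℂ)‖ := by
    rw [Complex.norm_real]
    exact (mem_ball_zero_iff.1 hw).le.trans (le_abs_self r)
  simp only [norm_mul, norm_pow]
  gcongr

variable {a : ℕ → ℂ}

theorem differentiable_tsum_mul_pow (ha : ∀ u : ℂ, Summable fun n ↦ a n * u ^ n) :
    Differentiable ℂ fun u ↦ ∑' n, a n * u ^ n := fun u ↦
  (Complex.differentiableOn_tsum_of_summable_norm (ha (‖u‖ + 1 : ℝ)).norm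
    (fun n ↦ ((differentiable_id.pow n).const_mul (a n)).differentiableOn) Metric.isOpen_ball
    fun n _ ↦ norm_mul_pow_le_of_mem_ball (a n) n).differentiableAt
    (Metric.isOpen_ball.mem_nhds (mem_ball_zero_iff.2 (lt_add_one ‖u‖)))

theorem hasSum_deriv_tsum_mul_pow (ha : ∀ u : ℂ, Summable fun n ↦ a n * u ^ n) (u : ℂ) :
    HasSum (fun n ↦ a n * (n * u ^ (n - 1))) (deriv (fun w ↦ ∑' n, a n * w ^ n) u) := by
  simpa using Complex.hasSum_deriv_of_summable_norm (ha (‖u‖ + 1 : ℝ)).norm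
    (fun n ↦ ((differentiable_id.pow n).const_mul (a n)).differentiableOn) Metric.isOpen_ball
    (fun n _ ↦ norm_mul_pow_le_of_mem_ball (a n) n) (mem_ball_zero_iff.2 (lt_add_one ‖u‖))

end PowerSeries

section Psi

/-- The Taylor coefficients of `Psi α`; they are `0` wherever `rising α n` vanishes. -/
noncomputable def psiCoeff (α : ℂ) (n : ℕ) : ℂ := (-1) ^ n / ((n.factorial : ℂ) * rising α n)

variable (α u : ℂ) (n : ℕ)

theorem rising_succ_left : rising α (n + 1) = α * rising (α + 1) n := by
  induction n with
  | zero => simp [rising]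
  | succ n ih => rw [rising, ih, rising]; push_cast; ring

theorem psiCoeff_succ : psiCoeff α (n + 1) = -psiCoeff α n / ((n + 1) * (α + n)) := by
  simp only [psiCoeff, rising, Nat.factorial_succ, pow_succ, Nat.cast_mul, Nat.cast_succ,
    div_eq_mul_inv, mul_inv]
  ring

theorem succ_mul_psiCoeff_succ : (n + 1) * psiCoeff α (n + 1) = -psiCoeff (α + 1) n / α := by
  have hn : (n : ℂ) + 1 ≠ 0 := n.cast_add_one_ne_zero
  simp only [psiCoeff, rising_succ_left, Nat.factorial_succ, pow_succ, Nat.cast_mul, Nat.cast_succ]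
  field_simp

variable {α} in
theorem add_mul_psiCoeff_add_one (hα : ∀ n : ℕ, α + n ≠ 0) :
    (α + n) * psiCoeff (α + 1) n = α * psiCoeff α n := by
  have hα₀ : α ≠ 0 := by simpa using hα 0
  have hαn : α + n ≠ 0 := hα n
  have hn : (n : ℂ) + 1 ≠ 0 := n.cast_add_one_ne_zero
  have h := succ_mul_psiCoeff_succ α n
  rw [psiCoeff_succ] at h
  field_simp at h
  linear_combination h

theorem tendsto_div_succ_mul_add_atTop :
    Tendsto (fun n : ℕ ↦ u / ((n + 1) * (α + n))) atTop (𝓝 0) := by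
  have hinv {w : ℕ → ℂ} (hw : Tendsto w atTop (Bornology.cobounded ℂ)) :
      Tendsto (fun n ↦ (w n)⁻¹) atTop (𝓝 0) := tendsto_inv₀_cobounded.comp hw
  have h₁ := hinv ((tendsto_add_const_cobounded 1).comp tendsto_natCast_atTop_cobounded)
  have h₂ := hinv ((tendsto_const_add_cobounded α).comp tendsto_natCast_atTop_cobounded)
  simpa [div_eq_mul_inv, mul_comm] using (h₁.mul h₂).const_mul u

theorem summable_psiCoeff_mul_pow : Summable fun n ↦ psiCoeff α n * u ^ n := by
  have hsmall : ∀ᶠ n : ℕ in atTop, ‖u / ((n + 1) * (α + n))‖ ≤ 1 / 2 :=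
    (tendsto_div_succ_mul_add_atTop α u).norm.eventually_le_const (by simp)
  refine summable_of_ratio_norm_eventually_le one_half_lt_one (hsmall.mono fun n hn ↦ ?_)
  have hratio : psiCoeff α (n + 1) * u ^ (n + 1)
      = -(u / ((n + 1) * (α + n))) * (psiCoeff α n * u ^ n) := by
    rw [psiCoeff_succ]; ring
  rw [hratio, norm_mul, norm_neg]
  gcongr

theorem hasSum_Psi : HasSum (fun n ↦ psiCoeff α n * u ^ n) (Psi α u) :=
  (summable_psiCoeff_mul_pow α u).hasSum

theorem differentiable_Psi : Differentiable ℂ (Psi α) :=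
  differentiable_tsum_mul_pow (summable_psiCoeff_mul_pow α)

theorem hasSum_deriv_Psi :
    HasSum (fun n ↦ psiCoeff α n * (n * u ^ (n - 1))) (deriv (Psi α) u) :=
  hasSum_deriv_tsum_mul_pow (summable_psiCoeff_mul_pow α) u

theorem deriv_Psi : deriv (Psi α) u = -Psi (α + 1) u / α := by
  have hshift := (hasSum_nat_add_iff' 1).2 (hasSum_deriv_Psi α u)
  have hcoeff (n : ℕ) : psiCoeff α (n + 1) * ((n + 1 : ℕ) * u ^ (n + 1 - 1))
      = -(psiCoeff (α + 1) n * u ^ n) / α := by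
    rw [Nat.add_sub_cancel]
    push_cast
    linear_combination u ^ n * succ_mul_psiCoeff_succ α n
  simp only [hcoeff, Finset.sum_range_one, Nat.cast_zero, zero_mul, mul_zero, sub_zero] at hshift
  exact hshift.unique ((hasSum_Psi (α + 1) u).neg.div_const α)

variable {α} in
theorem mul_deriv_Psi_add_one_add (hα : ∀ n : ℕ, α + n ≠ 0) :
    u * deriv (Psi (α + 1)) u + α * Psi (α + 1) u = α * Psi α u := by
  have hsum := ((hasSum_deriv_Psi (α + 1) u).mul_left u).add ((hasSum_Psi (α + 1) u).mul_left α)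
  refine hsum.unique (((hasSum_Psi α u).mul_left α).congr_fun fun n ↦ ?_)
  have hpow : u * ((n : ℂ) * u ^ (n - 1)) = n * u ^ n := by
    cases n <;> simp [pow_succ]; ring
  linear_combination psiCoeff (α + 1) n * hpow + u ^ n * add_mul_psiCoeff_add_one n hα

variable {α} in
theorem mul_Psi_add_two (hα : ∀ n : ℕ, α + n ≠ 0) :
    u * Psi (α + 1 + 1) u = α * (α + 1) * (Psi (α + 1) u - Psi α u) := by
  have h := mul_deriv_Psi_add_one_add u hα
  have hα₁ : α + 1 ≠ 0 := by simpa using hα 1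
  rw [deriv_Psi] at h
  field_simp at h
  linear_combination -h

end Psi

section Operators

variable {p q : ℕ}

/-- The Euler operator `E_x = ∑ x_i ∂_{x_i}`. -/
noncomputable def eulerX (f : Pt p q → ℂ) (z : Pt p q) : ℂ :=
  ∑ i, (z.1 i : ℂ) * pdx p q i f z

/-- The Euler operator `E_y = ∑ y_j ∂_{y_j}`. -/
noncomputable def eulerY (f : Pt p q → ℂ) (z : Pt p q) : ℂ :=
  ∑ j, (z.2 j : ℂ) * pdy p q j f z

/-- The Laplacian `Δ_y = ∑ ∂_{y_j}²`. -/
noncomputable def laplaceY (f : Pt p q → ℂ) (z : Pt p q) : ℂ :=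
  ∑ j, pdy p q j (pdy p q j f) z

theorem HOp_apply (f : Pt p q → ℂ) (z : Pt p q) :
    HOp p q f z = -eulerX f z - p / 2 * f z + eulerY f z + q / 2 * f z := rfl

theorem XmOp_apply (f : Pt p q → ℂ) (z : Pt p q) :
    XmOp p q f z = rhox p q z * f z + laplaceY f z / 2 := by
  simp only [XmOp, rhox, laplaceY]
  push_cast
  ring

theorem sum_fst_mul_fst (z : Pt p q) : ∑ i, (z.1 i : ℂ) * z.1 i = 2 * rhox p q z := by
  simp only [rhox, ← sq]
  push_cast
  ring

theorem sum_snd_mul_snd (z : Pt p q) : ∑ j, (z.2 j : ℂ) * z.2 j = 2 * rhoy p q z := by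
  simp only [rhoy, ← sq]
  push_cast
  ring

section Leibniz

variable {f g : Pt p q → ℂ}

theorem pdx_mul (hf : Differentiable ℝ f) (hg : Differentiable ℝ g) (i : Fin p) (z : Pt p q) :
    pdx p q i (f * g) z = f z * pdx p q i g z + g z * pdx p q i f z := by
  simp [pdx, fderiv_mul (hf z) (hg z)]

theorem pdy_mul (hf : Differentiable ℝ f) (hg : Differentiable ℝ g) (j : Fin q) :
    pdy p q j (f * g) = f * pdy p q j g + g * pdy p q j f := by
  ext z
  simp [pdy, fderiv_mul (hf z) (hg z)]

theorem pdy_const_smul (hf : Differentiable ℝ f) (c : ℂ) (j : Fin q) :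
    pdy p q j (c • f) = c • pdy p q j f := by
  ext z
  simp [pdy, fderiv_const_smul (hf z)]

theorem pdy_add (hf : Differentiable ℝ f) (hg : Differentiable ℝ g) (j : Fin q) :
    pdy p q j (f + g) = pdy p q j f + pdy p q j g := by
  ext z
  simp [pdy, fderiv_add (hf z) (hg z)]

theorem pdx_comp {Φ : ℂ → ℂ} (hΦ : Differentiable ℂ Φ) (hf : Differentiable ℝ f) (i : Fin p)
    (z : Pt p q) : pdx p q i (Φ ∘ f) z = deriv Φ (f z) * pdx p q i f z := by
  simp [pdx, ((hΦ (f z)).hasDerivAt.comp_hasFDerivAt z (hf z).hasFDerivAt).fderiv]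

theorem pdy_comp {Φ : ℂ → ℂ} (hΦ : Differentiable ℂ Φ) (hf : Differentiable ℝ f) (j : Fin q)
    (z : Pt p q) : pdy p q j (Φ ∘ f) z = deriv Φ (f z) * pdy p q j f z := by
  simp [pdy, ((hΦ (f z)).hasDerivAt.comp_hasFDerivAt z (hf z).hasFDerivAt).fderiv]

theorem differentiable_pdy (hf : ContDiff ℝ 2 f) (j : Fin q) : Differentiable ℝ (pdy p q j f) :=
  ((hf.fderiv_right (m := 1) (by norm_num)).clm_apply contDiff_const).differentiable one_ne_zero

theorem eulerX_mul (hf : Differentiable ℝ f) (hg : Differentiable ℝ g) (z : Pt p q) :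
    eulerX (f * g) z = f z * eulerX g z + g z * eulerX f z := by
  simp only [eulerX, pdx_mul hf hg, Finset.mul_sum, ← Finset.sum_add_distrib]
  exact Finset.sum_congr rfl fun i _ ↦ by ring

theorem eulerY_mul (hf : Differentiable ℝ f) (hg : Differentiable ℝ g) (z : Pt p q) :
    eulerY (f * g) z = f z * eulerY g z + g z * eulerY f z := by
  simp only [eulerY, pdy_mul hf hg, Pi.add_apply, Pi.mul_apply, Finset.mul_sum,
    ← Finset.sum_add_distrib]
  exact Finset.sum_congr rfl fun j _ ↦ by ring

theorem pdy_pdy_mul (hf : ContDiff ℝ 2 f) (hg : ContDiff ℝ 2 g) (j : Fin q) (z : Pt p q) :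
    pdy p q j (pdy p q j (f * g)) z = f z * pdy p q j (pdy p q j g) z
      + 2 * (pdy p q j f z * pdy p q j g z) + g z * pdy p q j (pdy p q j f) z := by
  have hf₁ := hf.differentiable two_ne_zero
  have hg₁ := hg.differentiable two_ne_zero
  have hf₂ := differentiable_pdy hf j
  have hg₂ := differentiable_pdy hg j
  rw [pdy_mul hf₁ hg₁, pdy_add (hf₁.mul hg₂) (hg₁.mul hf₂), pdy_mul hf₁ hg₂, pdy_mul hg₁ hf₂]
  simp only [Pi.add_apply, Pi.mul_apply]
  ring

theorem laplaceY_mul (hf : ContDiff ℝ 2 f) (hg : ContDiff ℝ 2 g) (z : Pt p q) :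
    laplaceY (f * g) z = f z * laplaceY g z + 2 * ∑ j, pdy p q j f z * pdy p q j g z
      + g z * laplaceY f z := by
  simp only [laplaceY, pdy_pdy_mul hf hg, Finset.sum_add_distrib, Finset.mul_sum]

end Leibniz

section Polynomials

open MvPolynomial

theorem hasFDerivAt_eval {σ : Type*} [Fintype σ] (P : MvPolynomial σ ℝ) (x : σ → ℝ) :
    HasFDerivAt (fun x ↦ eval x P)
      (∑ i, eval x (pderiv i P) • (ContinuousLinearMap.proj i : (σ → ℝ) →L[ℝ] ℝ)) x := by
  classical
  induction P using MvPolynomial.induction_on with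
  | C a => simpa using hasFDerivAt_const a x
  | add P Q hP hQ =>
    simp only [map_add, add_smul, Finset.sum_add_distrib]
    exact hP.add hQ
  | mul_X P j hP =>
    simp only [map_mul, eval_X]
    refine (hP.mul (hasFDerivAt_apply j x)).congr_fderiv ?_
    ext v
    simp [pderiv_X, Pi.single_apply, Finset.mul_sum, add_mul, Finset.sum_add_distrib, apply_ite,
      mul_assoc]

variable (P : MvPolynomial (Fin p) ℝ) (Q : MvPolynomial (Fin q) ℝ)

/-- The function `(x, y) ↦ P(x) Q(y)` attached to two polynomials. -/
noncomputable def polyTensor (z : Pt p q) : ℂ := (eval z.1 P : ℝ) * (eval z.2 Q : ℝ)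

theorem contDiff_polyTensor {n : ℕ∞} : ContDiff ℝ n (polyTensor P Q) := by
  have hP : ContDiff ℝ n fun z : Pt p q ↦ eval z.1 P :=
    (AnalyticOnNhd.eval_mvPolynomial P).contDiff.comp contDiff_fst
  have hQ : ContDiff ℝ n fun z : Pt p q ↦ eval z.2 Q :=
    (AnalyticOnNhd.eval_mvPolynomial Q).contDiff.comp contDiff_snd
  exact (Complex.ofRealCLM.contDiff.comp hP).mul (Complex.ofRealCLM.contDiff.comp hQ)

theorem differentiable_polyTensor : Differentiable ℝ (polyTensor P Q) :=
  (contDiff_polyTensor P Q (n := 1)).differentiable one_ne_zero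

theorem fderiv_polyTensor (z v : Pt p q) :
    fderiv ℝ (polyTensor P Q) z v = ∑ i, v.1 i * polyTensor (pderiv i P) Q z
      + ∑ j, v.2 j * polyTensor P (pderiv j Q) z := by
  have hP := Complex.ofRealCLM.hasFDerivAt.comp z ((hasFDerivAt_eval P z.1).comp z hasFDerivAt_fst)
  have hQ := Complex.ofRealCLM.hasFDerivAt.comp z ((hasFDerivAt_eval Q z.2).comp z hasFDerivAt_snd)
  have h : HasFDerivAt (polyTensor P Q) _ z := hP.mul hQ
  simp [h.fderiv, polyTensor, Finset.mul_sum, mul_assoc, mul_left_comm, mul_comm, add_comm]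

theorem pdx_polyTensor (i : Fin p) : pdx p q i (polyTensor P Q) = polyTensor (pderiv i P) Q := by
  ext z
  simp [pdx, fderiv_polyTensor, Pi.single_apply, apply_ite Complex.ofReal]

theorem pdy_polyTensor (j : Fin q) : pdy p q j (polyTensor P Q) = polyTensor P (pderiv j Q) := by
  ext z
  simp [pdy, fderiv_polyTensor, Pi.single_apply, apply_ite Complex.ofReal]

variable {P} in
theorem eulerX_polyTensor {d : ℕ} (hP : P.IsHomogeneous d) (z : Pt p q) :
    eulerX (polyTensor P Q) z = d * polyTensor P Q z := by
  have hEuler : ∑ i, z.1 i * eval z.1 (pderiv i P) = d * eval z.1 P := by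
    simpa using congrArg (eval z.1) hP.sum_X_mul_pderiv
  simp only [eulerX, pdx_polyTensor, polyTensor, ← mul_assoc, ← Finset.sum_mul]
  exact_mod_cast congrArg (fun r : ℝ ↦ (r : ℂ) * (eval z.2 Q : ℝ)) hEuler

variable {Q} in
theorem eulerY_polyTensor {d : ℕ} (hQ : Q.IsHomogeneous d) (z : Pt p q) :
    eulerY (polyTensor P Q) z = d * polyTensor P Q z := by
  have hEuler : ∑ j, z.2 j * eval z.2 (pderiv j Q) = d * eval z.2 Q := by
    simpa using congrArg (eval z.2) hQ.sum_X_mul_pderiv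
  simp only [eulerY, pdy_polyTensor, polyTensor, mul_left_comm _ ((eval z.1 P : ℝ) : ℂ),
    ← Finset.mul_sum]
  exact_mod_cast congrArg (fun r : ℝ ↦ ((eval z.1 P : ℝ) : ℂ) * r) hEuler

variable {Q} in
theorem laplaceY_polyTensor (hQ : ∑ j, pderiv j (pderiv j Q) = 0) (z : Pt p q) :
    laplaceY (polyTensor P Q) z = 0 := by
  have hΔ : ∑ j, eval z.2 (pderiv j (pderiv j Q)) = 0 := by
    simpa using congrArg (eval z.2) hQ
  simp only [laplaceY, pdy_polyTensor, polyTensor, ← Finset.mul_sum, ← Complex.ofReal_sum, hΔ,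
    Complex.ofReal_zero, mul_zero]

/-- The polynomial `r² / 2 = (∑ i, X i ^ 2) / 2`, whose values are `ρ_x` and `ρ_y`. -/
noncomputable def halfSumSq (n : ℕ) : MvPolynomial (Fin n) ℝ := C (1 / 2) * ∑ i, X i ^ 2

theorem eval_halfSumSq {n : ℕ} (x : Fin n → ℝ) :
    eval x (halfSumSq n) = (∑ i, x i ^ 2) / 2 := by
  simp [halfSumSq, div_eq_inv_mul]

theorem pderiv_halfSumSq {n : ℕ} (i : Fin n) : pderiv i (halfSumSq n) = X i := by
  have h2 : (C (1 / 2) * 2 : MvPolynomial (Fin n) ℝ) = 1 := by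
    rw [← map_ofNat C 2, ← C_mul]
    norm_num
  calc
    pderiv i (halfSumSq n) = C (1 / 2) * (2 * X i) := by
      simp [halfSumSq, pderiv_X, Pi.single_apply]
    _ = X i := by rw [← mul_assoc, h2, one_mul]

theorem isHomogeneous_halfSumSq (n : ℕ) : (halfSumSq n).IsHomogeneous 2 :=
  (IsHomogeneous.sum _ _ _ fun i _ ↦ isHomogeneous_X_pow i 2).C_mul _

end Polynomials

section PsiF

open MvPolynomial

theorem psiF_eq_comp (α : ℂ) :
    psiF p q α = Psi α ∘ polyTensor (halfSumSq p) (halfSumSq q) := by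
  ext z
  simp [psiF, polyTensor, eval_halfSumSq, rhox, rhoy]

variable (α : ℂ)

theorem contDiff_psiF {n : ℕ∞} : ContDiff ℝ n (psiF p q α) := by
  rw [psiF_eq_comp]
  exact ((differentiable_Psi α).contDiff.restrict_scalars ℝ).comp (contDiff_polyTensor _ _)

theorem differentiable_psiF : Differentiable ℝ (psiF p q α) :=
  (contDiff_psiF α (n := 1)).differentiable one_ne_zero

theorem pdx_psiF (i : Fin p) :
    pdx p q i (psiF p q α) = (-1 / α) • (polyTensor (X i) (halfSumSq q) * psiF p q (α + 1)) := by
  ext z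
  simp only [psiF_eq_comp, pdx_comp (differentiable_Psi α) (differentiable_polyTensor _ _),
    deriv_Psi, pdx_polyTensor, pderiv_halfSumSq, Pi.smul_apply, Pi.mul_apply, Function.comp_apply,
    smul_eq_mul]
  ring

theorem pdy_psiF (j : Fin q) :
    pdy p q j (psiF p q α) = (-1 / α) • (polyTensor (halfSumSq p) (X j) * psiF p q (α + 1)) := by
  ext z
  simp only [psiF_eq_comp, pdy_comp (differentiable_Psi α) (differentiable_polyTensor _ _),
    deriv_Psi, pdy_polyTensor, pderiv_halfSumSq, Pi.smul_apply, Pi.mul_apply, Function.comp_apply,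
    smul_eq_mul]
  ring

theorem pdx_psiF_apply (i : Fin p) (z : Pt p q) :
    pdx p q i (psiF p q α) z = -1 / α * rhoy p q z * psiF p q (α + 1) z * z.1 i := by
  simp only [pdx_psiF, Pi.smul_apply, Pi.mul_apply, polyTensor, eval_X, eval_halfSumSq, rhoy,
    smul_eq_mul]
  ring

theorem pdy_psiF_apply (j : Fin q) (z : Pt p q) :
    pdy p q j (psiF p q α) z = -1 / α * rhox p q z * psiF p q (α + 1) z * z.2 j := by
  simp only [pdy_psiF, Pi.smul_apply, Pi.mul_apply, polyTensor, eval_X, eval_halfSumSq, rhox,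
    smul_eq_mul]
  ring

theorem sum_mul_pdy_psiF (a : Fin q → ℂ) (z : Pt p q) :
    ∑ j, a j * pdy p q j (psiF p q α) z
      = -1 / α * rhox p q z * psiF p q (α + 1) z * ∑ j, z.2 j * a j := by
  simp only [pdy_psiF_apply, Finset.mul_sum]
  exact Finset.sum_congr rfl fun j _ ↦ by ring

theorem eulerX_psiF_eq_eulerY_psiF (z : Pt p q) :
    eulerX (psiF p q α) z = eulerY (psiF p q α) z := by
  simp only [eulerX, eulerY, pdx_psiF_apply, pdy_psiF_apply, mul_left_comm (Complex.ofReal _),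
    ← Finset.mul_sum, sum_fst_mul_fst, sum_snd_mul_snd]
  ring

theorem pdy_pdy_psiF (j : Fin q) (z : Pt p q) :
    pdy p q j (pdy p q j (psiF p q α)) z = -1 / α * rhox p q z * psiF p q (α + 1) z
      + rhox p q z ^ 2 * psiF p q (α + 1 + 1) z / α / (α + 1) * (z.2 j * z.2 j) := by
  have hρy := differentiable_polyTensor (halfSumSq p) (X j : MvPolynomial (Fin q) ℝ)
  have hψ := differentiable_psiF (p := p) (q := q) (α + 1)
  rw [pdy_psiF, pdy_const_smul (hρy.mul hψ), pdy_mul hρy hψ, pdy_polyTensor, pderiv_X_self]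
  simp only [Pi.smul_apply, Pi.add_apply, Pi.mul_apply, pdy_psiF_apply, polyTensor, eval_X,
    eval_halfSumSq, map_one, rhox, smul_eq_mul]
  push_cast
  ring

variable {α} in
theorem laplaceY_psiF (hα : ∀ n : ℕ, α + n ≠ 0) (z : Pt p q) :
    laplaceY (psiF p q α) z
      = rhox p q z * ((2 - q / α) * psiF p q (α + 1) z - 2 * psiF p q α z) := by
  have hα₀ : α ≠ 0 := by simpa using hα 0
  have hα₁ : α + 1 ≠ 0 := by simpa using hα 1
  have hcontig : (rhox p q z * rhoy p q z : ℂ) * psiF p q (α + 1 + 1) z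
      = α * (α + 1) * (psiF p q (α + 1) z - psiF p q α z) := by
    simpa [psiF] using mul_Psi_add_two (rhox p q z * rhoy p q z : ℝ) hα
  simp only [laplaceY, pdy_pdy_psiF, Finset.sum_add_distrib, ← Finset.mul_sum, sum_snd_mul_snd,
    Finset.sum_const, Finset.card_univ, Fintype.card_fin, nsmul_eq_mul]
  field_simp
  linear_combination 2 * rhox p q z * hcontig

end PsiF

section LowestWeight

variable {φ : Pt p q → ℂ} {d l : ℂ}

theorem HOp_mul_psiF (hφ : Differentiable ℝ φ) (hx : ∀ z, eulerX φ z = d * φ z)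
    (hy : ∀ z, eulerY φ z = l * φ z) (α : ℂ) (z : Pt p q) :
    HOp p q (φ * psiF p q α) z = (-(d + p / 2) + (l + q / 2)) * (φ * psiF p q α) z := by
  have hψ := differentiable_psiF (p := p) (q := q) α
  rw [HOp_apply, eulerX_mul hφ hψ, eulerY_mul hφ hψ, hx, hy, eulerX_psiF_eq_eulerY_psiF]
  simp only [Pi.mul_apply]
  ring

theorem XmOp_mul_psiF (hφ : ContDiff ℝ 2 φ) (hy : ∀ z, eulerY φ z = l * φ z)
    (hΔ : ∀ z, laplaceY φ z = 0) (hl : ∀ n : ℕ, l + q / 2 + n ≠ 0) (z : Pt p q) :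
    XmOp p q (φ * psiF p q (l + q / 2)) z = 0 := by
  have hα₀ : l + q / 2 ≠ 0 := by simpa using hl 0
  have hgrad := sum_mul_pdy_psiF (l + q / 2) (fun j ↦ pdy p q j φ z) z
  rw [show ∑ j, (z.2 j : ℂ) * pdy p q j φ z = l * φ z from hy z] at hgrad
  have hcancel : 2 - q / (l + q / 2) - 2 * l / (l + q / 2) = 0 := by
    rw [sub_sub, ← add_div, sub_eq_zero, eq_div_iff hα₀]
    ring
  rw [XmOp_apply, laplaceY_mul hφ (contDiff_psiF _), laplaceY_psiF hl, hΔ, hgrad, Pi.mul_apply]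
  linear_combination rhox p q z * φ z * psiF p q (l + q / 2 + 1) z / 2 * hcancel

end LowestWeight

end Operators

theorem natCast_add_half_add_natCast_ne_zero (l : ℕ) {q : ℕ} (hq : 1 ≤ q) (n : ℕ) :
    (l : ℂ) + q / 2 + n ≠ 0 := by
  have hpos : (0 : ℝ) < l + q / 2 + n := by positivity
  have hne := Complex.ofReal_ne_zero.2 hpos.ne'
  push_cast at hne
  exact hne

theorem stmt_13_general {p q : ℕ} {φ : Pt p q → ℂ} {d l : ℂ} (hφ : ContDiff ℝ 2 φ)
    (hx : ∀ z, eulerX φ z = d * φ z) (hy : ∀ z, eulerY φ z = l * φ z)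
    (hΔ : ∀ z, laplaceY φ z = 0) (hl : ∀ n : ℕ, l + q / 2 + n ≠ 0) :
    (∀ z, HOp p q (φ * psiF p q (l + q / 2)) z
      = (-(d + p / 2) + (l + q / 2)) * (φ * psiF p q (l + q / 2)) z) ∧
    ∀ z, XmOp p q (φ * psiF p q (l + q / 2)) z = 0 :=
  ⟨HOp_mul_psiF (hφ.differentiable two_ne_zero) hx hy _, XmOp_mul_psiF hφ hy hΔ hl⟩

theorem stmt_13 (p q k l : ℕ) (hp : 1 ≤ p) (hq : 1 ≤ q)
    (h₁ : MvPolynomial (Fin p) ℝ) (h₂ : MvPolynomial (Fin q) ℝ)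
    (hhom₁ : h₁.IsHomogeneous k) (hhom₂ : h₂.IsHomogeneous l)
    (hharm₁ : ∑ i : Fin p, MvPolynomial.pderiv i (MvPolynomial.pderiv i h₁) = 0)
    (hharm₂ : ∑ j : Fin q, MvPolynomial.pderiv j (MvPolynomial.pderiv j h₂) = 0)
    (κp κm : ℂ) (hκp : κp = (k : ℂ) + (p : ℂ) / 2) (hκm : κm = (l : ℂ) + (q : ℂ) / 2)
    (μ : ℕ) (f : Pt p q → ℂ)
    (hf : f = fun z =>
      ((MvPolynomial.eval z.1 h₁ : ℝ) : ℂ) * ((MvPolynomial.eval z.2 h₂ : ℝ) : ℂ) *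
        ((rhox p q z : ℝ) : ℂ) ^ μ * psiF p q κm z) :
    (∀ z, HOp p q f z = (-κp + κm - 2 * (μ : ℂ)) * f z) ∧ (∀ z, XmOp p q f z = 0) := by
  subst hκp hκm
  obtain rfl : f = polyTensor (h₁ * halfSumSq p ^ μ) h₂ * psiF p q (l + q / 2) := by
    ext z
    simp [hf, polyTensor, eval_halfSumSq, rhox, mul_right_comm]
  have hdeg := hhom₁.mul ((isHomogeneous_halfSumSq p).pow μ)
  have hweight : -((k : ℂ) + p / 2) + (l + q / 2) - 2 * μ
      = -((k + 2 * μ : ℕ) + p / 2) + (l + q / 2) := by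
    push_cast
    ring
  rw [hweight]
  exact stmt_13_general (contDiff_polyTensor _ _) (eulerX_polyTensor _ hdeg)
    (eulerY_polyTensor _ hhom₂) (laplaceY_polyTensor _ hharm₂)
    (natCast_add_half_add_natCast_ne_zero l hq)
end
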